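/- Let (E^•, I_•, ∫) be a Cheeger–Simons model over 𝕂 and k ≥ 0. There is a short exact sequence of abelian groups 0 → E^k/E^k_0 → Diff^k(CS) → H^{k+1}(I^•) → 0, where the first map is induced by α ↦ (q∘α̃)|_{Z_k(I_•)} (whose kernel is exactly E^k_0), and the second map is the homomorphism δ₂ assigning to f the class [c] ∈ H^{k+1}(I^•) where δT = ω̃ − c for any T ∈ F^k with (q∘T)|_{Z_k(I_•)} = f. -/

import Mathlib

open AddSubgroup

noncomputable section

/-- Cycles of an `ℕ`-indexed chain complex, with the convention `Z_0 = I_0`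
(i.e. `∂ : I_0 → I_{-1} = 0`). -/
def Zc {I : ℕ → Type*} [∀ i, AddCommGroup (I i)] (bd : ∀ k, I (k+1) →+ I k) :
    ∀ k, AddSubgroup (I k)
  | 0 => ⊤
  | n+1 => (bd n).ker

theorem mem_Zc_bd {I : ℕ → Type*} [∀ i, AddCommGroup (I i)] (bd : ∀ k, I (k+1) →+ I k)
    (hbd : ∀ k x, bd k (bd (k+1) x) = 0) :
    ∀ (k : ℕ) (β : I (k+1)), bd k β ∈ Zc bd k
  | 0, _ => mem_top _
  | n+1, β => by simpa [Zc, AddMonoidHom.mem_ker] using hbd n β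

/-- Coboundaries of an `ℕ`-indexed cochain complex, with the convention
`B^0 = 0`. -/
def Bc {E : ℕ → Type*} [∀ i, AddCommGroup (E i)] (d : ∀ k, E k →+ E (k+1)) :
    ∀ k, AddSubgroup (E k)
  | 0 => ⊥
  | n+1 => (d n).range

/-- Cohomology of an `ℕ`-indexed cochain complex. -/
abbrev Hc {E : ℕ → Type*} [∀ i, AddCommGroup (E i)] (d : ∀ k, E k →+ E (k+1)) (k : ℕ) :=
  ↥(d k).ker ⧸ ((Bc d k).addSubgroupOf (d k).ker)

/-- The class of a cocycle in cohomology. -/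
def Hmk {E : ℕ → Type*} [∀ i, AddCommGroup (E i)] (d : ∀ k, E k →+ E (k+1)) (k : ℕ) :
    ↥(d k).ker →+ Hc d k := QuotientAddGroup.mk' _

/-- The codifferential on `Hom(I_•, A)` induced by the boundary map of `I_•`. -/
def codiff {I : ℕ → Type*} [∀ i, AddCommGroup (I i)] (bd : ∀ k, I (k+1) →+ I k)
    (A : Type*) [AddCommGroup A] (k : ℕ) : (I k →+ A) →+ (I (k+1) →+ A) :=
  AddMonoidHom.mk' (fun h => h.comp (bd k)) (fun h g => by ext x; simp)

/-- `ℤ` regarded as an additive subgroup of `𝕂`. -/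
def intSub (𝕂 : Type*) [Field 𝕂] : AddSubgroup 𝕂 := zmultiples (1 : 𝕂)

/-- The group `𝕂/ℤ`. -/
abbrev KmodZ (𝕂 : Type*) [Field 𝕂] := 𝕂 ⧸ intSub 𝕂

/-- The quotient map `q : 𝕂 → 𝕂/ℤ`. -/
def qZ (𝕂 : Type*) [Field 𝕂] : 𝕂 →+ KmodZ 𝕂 := QuotientAddGroup.mk' _

/-- The inclusion `Φ : Hom(I_k, ℤ) → Hom(I_k, 𝕂)`. -/
def PhiMap {I : ℕ → Type*} [∀ i, AddCommGroup (I i)] (𝕂 : Type*) [Field 𝕂] (k : ℕ) :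
    (I k →+ ℤ) →+ (I k →+ 𝕂) :=
  AddMonoidHom.mk' (fun h => (Int.castAddHom 𝕂).comp h) (fun a b => by ext x; simp)

/-- The differential character group `Diff^k` of a Cheeger–Simons model. -/
def DiffChar {𝕂 : Type*} [Field 𝕂] {I E : ℕ → Type*}
    [∀ i, AddCommGroup (I i)] [∀ i, AddCommGroup (E i)]
    (bd : ∀ k, I (k+1) →+ I k) (hbd : ∀ k x, bd k (bd (k+1) x) = 0)
    (pair : ∀ k, E k →+ (I k →+ 𝕂)) (k : ℕ) :
    AddSubgroup ((Zc bd k) →+ KmodZ 𝕂) where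
  carrier := {f | ∃ ω : E (k+1), ∀ β : I (k+1),
      f ⟨bd k β, mem_Zc_bd bd hbd k β⟩ = qZ 𝕂 (pair (k+1) ω β)}
  add_mem' := by
    rintro f g ⟨ω, hω⟩ ⟨ω', hω'⟩
    exact ⟨ω + ω', fun β => by
      simp [AddMonoidHom.add_apply, hω β, hω' β]⟩
  zero_mem' := ⟨0, fun β => by simp [qZ]⟩
  neg_mem' := by
    rintro f ⟨ω, hω⟩
    exact ⟨-ω, fun β => by simp [AddMonoidHom.neg_apply, hω β]⟩

/-- The subgroup `E^k_0` of closed elements of `E^k` with integral periods. -/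
def Ezero {𝕂 : Type*} [Field 𝕂] {I E : ℕ → Type*}
    [∀ i, AddCommGroup (I i)] [∀ i, AddCommGroup (E i)]
    (bd : ∀ k, I (k+1) →+ I k) (d : ∀ k, E k →+ E (k+1))
    (pair : ∀ k, E k →+ (I k →+ 𝕂)) (k : ℕ) : AddSubgroup (E k) where
  carrier := {ω | d k ω = 0 ∧ ∀ α ∈ Zc bd k, pair k ω α ∈ intSub 𝕂}
  add_mem' := by
    rintro ω ω' ⟨h1, h2⟩ ⟨h1', h2'⟩
    refine ⟨by simp [h1, h1'], fun α hα => ?_⟩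
    simpa [AddMonoidHom.add_apply] using add_mem (h2 α hα) (h2' α hα)
  zero_mem' := ⟨by simp, fun α _ => by simp [zero_mem]⟩
  neg_mem' := by
    rintro ω ⟨h1, h2⟩
    exact ⟨by simp [h1], fun α hα => by
      simpa [AddMonoidHom.neg_apply] using neg_mem (h2 α hα)⟩


/-- Lifting out of free abelian groups. -/
theorem aux_lift {P A B : Type*} [AddCommGroup P] [Module.Free ℤ P] [AddCommGroup A]
    [AddCommGroup B] (p : A →+ B) (hp : Function.Surjective p) (g : P →+ B) :
    ∃ h : P →+ A, ∀ x, p (h x) = g x := by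
  obtain ⟨h, hh⟩ := Module.projective_lifting_property p.toIntLinearMap g.toIntLinearMap hp
  exact ⟨h.toAddMonoidHom, fun x => by simpa using DFunLike.congr_fun hh x⟩

theorem aux_retract {M P : Type*} [AddCommGroup M] [Module.Free ℤ M] [AddCommGroup P]
    [Module.Free ℤ P] (p : M →+ P) :
    ∃ r : M →+ p.ker, ∀ x : p.ker, r x = x := by
  let b := Module.Free.chooseBasis ℤ M
  let J := Module.Free.ChooseBasisIndex ℤ M
  let i : M →+ (J →₀ ℚ) :=
    (Finsupp.mapRange.addMonoidHom (Int.castAddHom ℚ)).comp b.repr.toAddEquiv.toAddMonoidHom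
  have hi : Function.Injective i := by
    intro x y hxy
    apply b.repr.injective
    exact Finsupp.mapRange_injective _ (by simp) Int.cast_injective hxy
  let K : AddSubgroup (J →₀ ℚ) := p.ker.map i
  let π : (J →₀ ℚ) →+ (J →₀ ℚ) ⧸ K := QuotientAddGroup.mk' K
  have hπ : Function.Surjective π := QuotientAddGroup.mk'_surjective K
  letI : DivisibleBy ((J →₀ ℚ) ⧸ K) ℤ := divisibleByOfSMulRightSurj _ _ (by
    intro n hn y
    obtain ⟨x, rfl⟩ := hπ y
    refine ⟨π ((n : ℚ)⁻¹ • x), ?_⟩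
    show n • π ((n : ℚ)⁻¹ • x) = π x
    rw [← map_zsmul]
    congr 1
    rw [← Int.cast_smul_eq_zsmul ℚ, smul_smul, mul_inv_cancel₀ (by exact_mod_cast hn), one_smul])
  let u : M ⧸ p.ker →+ (J →₀ ℚ) ⧸ K := QuotientAddGroup.lift p.ker (π.comp i) (by
    intro x hx
    exact (QuotientAddGroup.eq_zero_iff _).2 ⟨x, hx, rfl⟩)
  obtain ⟨g, hg⟩ := (Module.Baer.of_divisible ((J →₀ ℚ) ⧸ K)).extension_property_addMonoidHom
    (QuotientAddGroup.kerLift p) (QuotientAddGroup.kerLift_injective p) u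
  have hg' : ∀ m, g (p m) = π (i m) := fun m =>
    DFunLike.congr_fun hg (QuotientAddGroup.mk m : M ⧸ p.ker)
  obtain ⟨h, hh⟩ := aux_lift π hπ g
  have key : ∀ m, ∃ x : p.ker, i x = i m - h (p m) := by
    intro m
    have : π (i m - h (p m)) = 0 := by rw [map_sub, hh, hg', sub_self]
    obtain ⟨x, hx, hx'⟩ := (QuotientAddGroup.eq_zero_iff _).1 this
    exact ⟨⟨x, hx⟩, hx'⟩
  choose r hr using key
  refine ⟨AddMonoidHom.mk' r ?_, ?_⟩
  · intro a c
    apply Subtype.ext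
    apply hi
    rw [hr]
    simp only [AddSubgroup.coe_add, map_add, hr]
    abel
  · intro x
    apply Subtype.ext
    apply hi
    show i (r x) = _
    rw [hr, (AddMonoidHom.mem_ker).1 x.2]
    simp

theorem aux_retract_Zc {I : ℕ → Type*} [∀ i, AddCommGroup (I i)] [∀ i, Module.Free ℤ (I i)]
    (bd : ∀ k, I (k+1) →+ I k) :
    ∀ k, ∃ r : I k →+ Zc bd k, ∀ x : Zc bd k, r x = x
  | 0 => ⟨AddMonoidHom.mk' (fun x => ⟨x, mem_top _⟩) (fun _ _ => rfl), fun _ => rfl⟩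
  | n+1 => aux_retract (bd n)

theorem aux_Bc_Zc {I : ℕ → Type*} [∀ i, AddCommGroup (I i)]
    (bd : ∀ k, I (k+1) →+ I k) (A : Type*) [AddCommGroup A] :
    ∀ k (h : I k →+ A), h ∈ Bc (codiff bd A) k → ∀ x ∈ Zc bd k, h x = 0
  | 0, h, hh, x, _ => by
    have : h = 0 := hh
    simp [this]
  | n+1, h, ⟨g, hg⟩, x, hx => by
    have hx' : bd n x = 0 := hx
    rw [← hg]
    show g (bd n x) = 0
    rw [hx', map_zero]

theorem aux_q {𝕂 : Type*} [Field 𝕂] (x : 𝕂) : qZ 𝕂 x = 0 ↔ x ∈ intSub 𝕂 :=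
  QuotientAddGroup.eq_zero_iff x

theorem aux_int {𝕂 : Type*} [Field 𝕂] [CharZero 𝕂] {M : Type*} [AddCommGroup M]
    (T : M →+ 𝕂) (hT : ∀ x, T x ∈ intSub 𝕂) :
    ∃ c : M →+ ℤ, ∀ x, ((c x : ℤ) : 𝕂) = T x := by
  have : ∀ x, ∃ n : ℤ, (n : 𝕂) = T x := by
    intro x
    obtain ⟨n, hn⟩ := AddSubgroup.mem_zmultiples_iff.1 (hT x)
    exact ⟨n, by simpa using hn⟩
  choose c hc using this
  refine ⟨AddMonoidHom.mk' c ?_, hc⟩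
  intro a b
  have : ((c (a + b) : ℤ) : 𝕂) = ((c a + c b : ℤ) : 𝕂) := by
    push_cast
    simp [hc]
  exact_mod_cast this

theorem aux_cast_mem {𝕂 : Type*} [Field 𝕂] (n : ℤ) : (n : 𝕂) ∈ intSub 𝕂 :=
  AddSubgroup.mem_zmultiples_iff.2 ⟨n, by simp⟩

/-- There is a short exact sequence
`0 → E^k/E^k_0 → Diff^k(𝒞𝒮) → H^{k+1}(I^•) → 0`, where the first map is induced by
`α ↦ (q ∘ α̃)|_{Z_k(I_•)}` (with kernel exactly `E^k_0`) and the second is `δ₂`. -/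
theorem statement4
    {𝕂 : Type*} [Field 𝕂] [CharZero 𝕂]
    (I E : ℕ → Type*)
    [∀ i, AddCommGroup (I i)] [∀ i, Module.Free ℤ (I i)]
    [∀ i, AddCommGroup (E i)] [∀ i, Module 𝕂 (E i)]
    (bd : ∀ k, I (k+1) →+ I k)
    (hbd : ∀ k x, bd k (bd (k+1) x) = 0)
    (d : ∀ k, E k →+ E (k+1))
    (hd : ∀ k x, d (k+1) (d k x) = 0)
    (hdsmul : ∀ (k : ℕ) (c : 𝕂) (e : E k), d k (c • e) = c • d k e)
    (pair : ∀ k, E k →+ (I k →+ 𝕂))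
    (pair_smul : ∀ (k : ℕ) (c : 𝕂) (e : E k) (x : I k), pair k (c • e) x = c * pair k e x)
    (pair_injE : ∀ k, Function.Injective (pair k))
    (pair_injI : ∀ (k : ℕ) (x y : I k), (∀ e : E k, pair k e x = pair k e y) → x = y)
    (int_triv : ∀ (k : ℕ) (e : E k), (∀ β : I k, pair k e β ∈ intSub 𝕂) → e = 0)
    (stokes : ∀ (k : ℕ) (e : E k) (α : I (k+1)), pair k e (bd k α) = pair (k+1) (d k e) α)
    (deRham_inj : ∀ (k : ℕ) (e : E k), d k e = 0 → pair k e ∈ Bc (codiff bd 𝕂) k → e ∈ Bc d k)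
    (deRham_surj : ∀ (k : ℕ) (h : I k →+ 𝕂), codiff bd 𝕂 k h = 0 →
      ∃ e : E k, d k e = 0 ∧ h - pair k e ∈ Bc (codiff bd 𝕂) k)
    (k : ℕ) :
    ∃ (ja : E k →+ ↥(DiffChar bd hbd pair k))
      (δ₂ : ↥(DiffChar bd hbd pair k) →+ Hc (codiff bd ℤ) (k+1)),
      (∀ α : E k, ((ja α) : ↥(Zc bd k) →+ KmodZ 𝕂)
          = (qZ 𝕂).comp ((pair k α).comp (Zc bd k).subtype)) ∧
      (∀ α : E k, ja α = 0 ↔ α ∈ Ezero bd d pair k) ∧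
      (∀ (f : ↥(DiffChar bd hbd pair k)) (T : I k →+ 𝕂) (ω : E (k+1))
          (c : I (k+1) →+ ℤ) (hc : c ∈ (codiff bd ℤ (k+1)).ker),
          (∀ x : ↥(Zc bd k), qZ 𝕂 (T x) = (f : ↥(Zc bd k) →+ KmodZ 𝕂) x) →
          codiff bd 𝕂 k T = pair (k+1) ω - PhiMap 𝕂 (k+1) c →
          δ₂ f = Hmk (codiff bd ℤ) (k+1) ⟨c, hc⟩) ∧
      Function.Surjective δ₂ ∧
      (∀ f, δ₂ f = 0 ↔ f ∈ ja.range) := by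
  classical
  obtain ⟨r, hr⟩ := aux_retract_Zc bd k
  -- existence
  have ex : ∀ f : ↥(DiffChar bd hbd pair k), ∃ (T : I k →+ 𝕂) (ω : E (k+1))
      (c : ↥(codiff bd ℤ (k+1)).ker),
      (∀ x : ↥(Zc bd k), qZ 𝕂 (T x) = (f : ↥(Zc bd k) →+ KmodZ 𝕂) x) ∧
      codiff bd 𝕂 k T = pair (k+1) ω - PhiMap 𝕂 (k+1) c := by
    rintro ⟨f, ω, hω⟩
    obtain ⟨T, hT⟩ := aux_lift (qZ 𝕂) (QuotientAddGroup.mk'_surjective _) (f.comp r)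
    have hTZ : ∀ x : ↥(Zc bd k), qZ 𝕂 (T x) = f x := by
      intro x
      rw [hT, AddMonoidHom.comp_apply, hr]
    obtain ⟨c, hc⟩ := aux_int (pair (k+1) ω - codiff bd 𝕂 k T) (by
      intro β
      rw [← aux_q]
      have h1 := hTZ ⟨bd k β, mem_Zc_bd bd hbd k β⟩
      rw [hω] at h1
      show qZ 𝕂 (pair (k+1) ω β - T (bd k β)) = 0
      rw [map_sub, ← h1, sub_self])
    have hc' : ∀ β, ((c β : ℤ) : 𝕂) = pair (k+1) ω β - T (bd k β) := hc
    have hdω : d (k+1) ω = 0 := by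
      apply int_triv
      intro β
      rw [← stokes]
      have := hc' (bd (k+1) β)
      rw [hbd, map_zero, sub_zero] at this
      rw [← this]
      exact aux_cast_mem _
    refine ⟨T, ω, ⟨c, ?_⟩, hTZ, ?_⟩
    · rw [AddMonoidHom.mem_ker]
      ext β
      show c (bd (k+1) β) = 0
      have := hc' (bd (k+1) β)
      rw [hbd, map_zero, sub_zero, stokes, hdω] at this
      simpa using this
    · ext β
      show T (bd k β) = pair (k+1) ω β - ((c β : ℤ) : 𝕂)
      rw [hc']
      abel
  -- uniqueness
  have uniq : ∀ (T : I k →+ 𝕂) (ω : E (k+1)) (c : I (k+1) →+ ℤ),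
      (∀ x : ↥(Zc bd k), qZ 𝕂 (T x) = 0) →
      codiff bd 𝕂 k T = pair (k+1) ω - PhiMap 𝕂 (k+1) c →
      c ∈ (codiff bd ℤ k).range := by
    intro T ω c hT hδ
    have hδ' : ∀ β, T (bd k β) = pair (k+1) ω β - ((c β : ℤ) : 𝕂) :=
      fun β => DFunLike.congr_fun hδ β
    obtain ⟨s, hs⟩ := aux_int (T.comp (Zc bd k).subtype) (fun x => (aux_q _).1 (hT x))
    have hs' : ∀ β, ((s ⟨bd k β, mem_Zc_bd bd hbd k β⟩ : ℤ) : 𝕂) = T (bd k β) :=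
      fun β => hs ⟨bd k β, mem_Zc_bd bd hbd k β⟩
    have hω : ω = 0 := by
      apply int_triv
      intro β
      have : pair (k+1) ω β = ((s ⟨bd k β, mem_Zc_bd bd hbd k β⟩ + c β : ℤ) : 𝕂) := by
        push_cast
        rw [hs', hδ']
        abel
      rw [this]
      exact aux_cast_mem _
    refine ⟨-(s.comp r), ?_⟩
    ext β
    show -(s (r (bd k β))) = c β
    have h1 : r (bd k β) = ⟨bd k β, mem_Zc_bd bd hbd k β⟩ :=
      hr ⟨bd k β, mem_Zc_bd bd hbd k β⟩
    rw [h1]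
    have h2 := hs' β
    rw [hδ', hω] at h2
    simp only [map_zero, AddMonoidHom.zero_apply, zero_sub] at h2
    have h3 : s ⟨bd k β, mem_Zc_bd bd hbd k β⟩ = - c β := by exact_mod_cast h2
    rw [h3, neg_neg]
  have uniq' : ∀ (T : I k →+ 𝕂) (ω : E (k+1)) (c : ↥(codiff bd ℤ (k+1)).ker),
      (∀ x : ↥(Zc bd k), qZ 𝕂 (T x) = 0) →
      codiff bd 𝕂 k T = pair (k+1) ω - PhiMap 𝕂 (k+1) c →
      Hmk (codiff bd ℤ) (k+1) c = 0 := by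
    intro T ω c h1 h2
    exact (QuotientAddGroup.eq_zero_iff _).2 (AddSubgroup.mem_addSubgroupOf.2 (uniq T ω c h1 h2))
  choose T ω c hT hδ using ex
  let δ₂ : ↥(DiffChar bd hbd pair k) →+ Hc (codiff bd ℤ) (k+1) :=
    AddMonoidHom.mk' (fun f => Hmk (codiff bd ℤ) (k+1) (c f)) (by
      intro f g
      rw [← map_add, ← sub_eq_zero, ← map_sub]
      apply uniq' (T (f + g) - (T f + T g)) (ω (f + g) - (ω f + ω g))
      · intro x
        simp [hT]
      · simp only [map_sub, map_add, hδ, AddSubgroup.coe_sub, AddSubgroup.coe_add]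
        abel)
  have hδ₂ : ∀ (f : ↥(DiffChar bd hbd pair k)) (T : I k →+ 𝕂) (ω : E (k+1))
          (c : I (k+1) →+ ℤ) (hc : c ∈ (codiff bd ℤ (k+1)).ker),
          (∀ x : ↥(Zc bd k), qZ 𝕂 (T x) = (f : ↥(Zc bd k) →+ KmodZ 𝕂) x) →
          codiff bd 𝕂 k T = pair (k+1) ω - PhiMap 𝕂 (k+1) c →
          δ₂ f = Hmk (codiff bd ℤ) (k+1) ⟨c, hc⟩ := by
    intro f T' ω' c' hc' h1 h2
    show Hmk (codiff bd ℤ) (k+1) (c f) = _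
    rw [← sub_eq_zero, ← map_sub]
    apply uniq' (T f - T') (ω f - ω')
    · intro x
      simp [hT, h1]
    · simp only [map_sub, hδ, h2, AddSubgroup.coe_sub]
      abel
  let ja : E k →+ ↥(DiffChar bd hbd pair k) :=
    AddMonoidHom.mk' (fun α => ⟨(qZ 𝕂).comp ((pair k α).comp (Zc bd k).subtype), d k α, by
      intro β
      show qZ 𝕂 (pair k α (bd k β)) = _
      rw [stokes]⟩) (by
      intro a b
      apply Subtype.ext
      ext x
      simp)
  have hja : ∀ α : E k, ((ja α) : ↥(Zc bd k) →+ KmodZ 𝕂)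
          = (qZ 𝕂).comp ((pair k α).comp (Zc bd k).subtype) := fun _ => rfl
  refine ⟨ja, δ₂, hja, ?_, hδ₂, ?_, ?_⟩
  · intro α
    constructor
    · intro h
      have h1 : ∀ x ∈ Zc bd k, pair k α x ∈ intSub 𝕂 := by
        intro x hx
        rw [← aux_q]
        have := hja α
        rw [h] at this
        exact (DFunLike.congr_fun this ⟨x, hx⟩).symm
      refine ⟨?_, h1⟩
      apply int_triv
      intro β
      rw [← stokes]
      exact h1 _ (mem_Zc_bd bd hbd k β)
    · rintro ⟨_, h⟩
      apply Subtype.ext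
      rw [hja]
      apply AddMonoidHom.ext
      intro x
      exact (aux_q _).2 (h x x.2)
  · intro y
    obtain ⟨⟨c', hc'⟩, rfl⟩ := QuotientAddGroup.mk'_surjective _ y
    obtain ⟨e, he, h, hh⟩ := deRham_surj (k+1) (PhiMap 𝕂 (k+1) c') (by
      ext β
      show ((c' (bd (k+1) β) : ℤ) : 𝕂) = 0
      have : c' (bd (k+1) β) = 0 := DFunLike.congr_fun ((AddMonoidHom.mem_ker).1 hc') β
      rw [this, Int.cast_zero])
    have hT' : codiff bd 𝕂 k (-h) = pair (k+1) e - PhiMap 𝕂 (k+1) c' := by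
      rw [map_neg, hh]
      abel
    refine ⟨⟨(qZ 𝕂).comp ((-h).comp (Zc bd k).subtype), e, ?_⟩, ?_⟩
    · intro β
      have h1 : (-h) (bd k β) = pair (k+1) e β - ((c' β : ℤ) : 𝕂) := DFunLike.congr_fun hT' β
      show qZ 𝕂 ((-h) (bd k β)) = _
      rw [h1, map_sub, (aux_q _).2 (aux_cast_mem _), sub_zero]
    · exact hδ₂ _ (-h) e c' hc' (fun x => rfl) hT'
  · intro f
    constructor
    · intro h
      have h1 : (c f : I (k+1) →+ ℤ) ∈ (codiff bd ℤ k).range :=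
        AddSubgroup.mem_addSubgroupOf.1 ((QuotientAddGroup.eq_zero_iff _).1 h)
      obtain ⟨s, hs⟩ := h1
      have h2 : codiff bd 𝕂 k (T f + PhiMap 𝕂 k s) = pair (k+1) (ω f) := by
        rw [map_add, hδ, ← hs]
        have : codiff bd 𝕂 k (PhiMap 𝕂 k s) = PhiMap 𝕂 (k+1) (codiff bd ℤ k s) := rfl
        rw [this]
        abel
      have hdω : d (k+1) (ω f) = 0 := by
        apply int_triv
        intro β
        rw [← stokes, ← h2]
        show (T f + PhiMap 𝕂 k s) (bd k (bd (k+1) β)) ∈ _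
        rw [hbd, map_zero]
        exact zero_mem _
      obtain ⟨η, hη⟩ := deRham_inj (k+1) (ω f) hdω ⟨_, h2⟩
      obtain ⟨e, he, hB⟩ := deRham_surj k (T f + PhiMap 𝕂 k s - pair k η) (by
        rw [map_sub, h2, ← hη, sub_eq_zero]
        ext β
        exact (stokes k η β).symm)
      refine ⟨η + e, ?_⟩
      apply Subtype.ext
      rw [hja]
      apply AddMonoidHom.ext
      intro x
      have h3 := aux_Bc_Zc bd 𝕂 k _ hB x x.2
      have h3' : T f x + ((s x : ℤ) : 𝕂) - pair k η x - pair k e x = 0 := h3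
      have h4 : pair k (η + e) x = T f x + ((s x : ℤ) : 𝕂) := by
        rw [map_add, AddMonoidHom.add_apply]
        linear_combination -h3'
      show qZ 𝕂 (pair k (η + e) x) = _
      rw [h4, map_add, hT, (aux_q _).2 (aux_cast_mem _), add_zero]
    · rintro ⟨α, rfl⟩
      rw [hδ₂ (ja α) (pair k α) (d k α) 0 (zero_mem _) (fun x => rfl) (by
        rw [map_zero, sub_zero]
        ext β
        exact stokes k α β)]
      exact map_zero _

end
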